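/- Suppose M is a countable structure, cl is a nontrivial disjointifying invariant closure operation on M, and ā is a finite tuple from M with cl(ā) ≠ M. Let N = M(ā) be the expansion of M by constants for ā, and define cl′(A) := cl(A ∪ ā) for all A ⊆ M. Then cl′ is a nontrivial disjointifying invariant closure operation on N. -/

import Mathlib

open FirstOrder Language

universe u v w

namespace Cl

variable (L : FirstOrder.Language.{u, v}) (M : Type w) [L.Structure M]

/-- The independence relation associated to a closure operation. -/
def IndepRel (cl : Set M → Set M) (A C B : Set M) : Prop :=
  A ∩ cl (B ∪ C) ⊆ cl C ∧ B ∩ cl (A ∪ C) ⊆ cl C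

/-- `cl` is an invariant closure operation: extensive, monotone, idempotent, and
commuting with every automorphism of `M`. -/
def IsInvariantClosure (cl : Set M → Set M) : Prop :=
  (∀ A : Set M, A ⊆ cl A) ∧
  (∀ A B : Set M, A ⊆ B → cl A ⊆ cl B) ∧
  (∀ A : Set M, cl (cl A) = cl A) ∧
  (∀ (σ : M ≃[L] M) (A : Set M), cl (⇑σ '' A) = ⇑σ '' cl A)

/-- `cl` is disjointifying: for all finite sets `A, B ⊇ C` there is a conjugate `A' ≅_C A`
of `A` over `C` with `A' ⫫_C B`. -/
def Disjointifying (cl : Set M → Set M) : Prop :=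
  ∀ A B C : Set M, A.Finite → B.Finite → C ⊆ A → C ⊆ B →
    ∃ σ : M ≃[L] M, (∀ x ∈ C, σ x = x) ∧ IndepRel M cl (⇑σ '' A) C B

/-- The expansion `M(c̄)` of `M` by (finitely many) constants. -/
def withConsts {n : ℕ} (c : Fin n → M) : (L[[Fin n]]).Structure M :=
  letI : (constantsOn (Fin n)).Structure M := constantsOn.structure c
  inferInstance

end Cl

open Cl

/-!
Independence over `C` for `cl'(A) = cl (A ∪ D)` follows from independence over `C ∪ D` for `cl`.
Hence an automorphism that makes `A ∪ D` independent from `B ∪ D` over `C ∪ D` also makes `A`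
independent from `B` over `C` for `cl'`; as it fixes `D` pointwise, it is an automorphism of the
expansion naming `D`. Conversely, automorphisms of the expansion preserve `D`, so they commute
with `cl'`.
-/

namespace Cl

section Automorphisms

variable {L L' : FirstOrder.Language} {M N : Type*} [L.Structure M] [L.Structure N]

/-- The reduct along `φ : L →ᴸ L'` of an isomorphism of `L'`-structures, where the `L'`-structures
are expansions of the given `L`-structures along `φ`. -/
def reductEquiv [L'.Structure M] [L'.Structure N] (φ : L →ᴸ L') [φ.IsExpansionOn M]
    [φ.IsExpansionOn N] (σ : M ≃[L'] N) : M ≃[L] N where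
  toEquiv := σ.toEquiv
  map_fun' f x := by simpa only [φ.map_onFunction] using σ.map_fun' (φ.onFunction f) x
  map_rel' r x := by simpa only [φ.map_onRelation] using σ.map_rel' (φ.onRelation r) x

variable {α : Type*} [(constantsOn α).Structure M] [(constantsOn α).Structure N]

/-- An isomorphism that matches the interpretations of the constants in `α`, as an isomorphism of
the expansions by these constants. -/
def equivWithConstants (σ : M ≃[L] N) (hσ : ∀ a : α, σ (L.con a : M) = (L.con a : N)) :
    M ≃[L[[α]]] N where
  toEquiv := σ.toEquiv
  map_fun' {n} f x :=
    match n, f with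
    | _, Sum.inl f => σ.map_fun' f x
    | 0, Sum.inr a =>
      (congrArg σ funMap_eq_coe_constants).trans <| (hσ a).trans funMap_eq_coe_constants.symm
    | _ + 1, Sum.inr f => isEmptyElim f
  map_rel' r x :=
    match r with
    | Sum.inl r => σ.map_rel' r x
    | Sum.inr r => isEmptyElim r

theorem image_range_con (σ : M ≃[L[[α]]] N) :
    σ '' Set.range (fun a : α => (L.con a : M)) = Set.range (fun a : α => (L.con a : N)) := by
  simp only [← Set.range_comp, Function.comp_def, Equiv.map_constants]

end Automorphisms

section Localization

variable {M : Type*} {cl : Set M → Set M} {D : Set M}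

/-- The localization of a closure operation at a set `D`, often written `cl_D`. -/
def localization (cl : Set M → Set M) (D : Set M) : Set M → Set M :=
  fun A => cl (A ∪ D)

theorem IndepRel.localization {A B C : Set M} (h : IndepRel M cl (A ∪ D) (C ∪ D) (B ∪ D)) :
    IndepRel M (localization cl D) A C B := by
  simp only [IndepRel, ← Set.union_union_distrib_right] at h
  exact h.imp (Set.inter_subset_inter_left _ Set.subset_union_left).trans
    (Set.inter_subset_inter_left _ Set.subset_union_left).trans

variable {L L' : FirstOrder.Language} [L.Structure M] [L'.Structure M]

theorem IsInvariantClosure.localization (hcl : IsInvariantClosure L M cl) (φ : L →ᴸ L')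
    [φ.IsExpansionOn M] (hD : ∀ σ : M ≃[L'] M, σ '' D = D) :
    IsInvariantClosure L' M (localization cl D) := by
  obtain ⟨extensive, monotone, idempotent, equivariant⟩ := hcl
  refine ⟨fun A => Set.subset_union_left.trans (extensive _),
    fun A B hAB => monotone _ _ (Set.union_subset_union_left D hAB), fun A => ?_, fun σ A => ?_⟩
  · have hDcl : D ⊆ cl (A ∪ D) := Set.subset_union_right.trans (extensive _)
    calc cl (cl (A ∪ D) ∪ D) = cl (cl (A ∪ D)) := by rw [Set.union_eq_self_of_subset_right hDcl]
      _ = cl (A ∪ D) := idempotent _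
  · calc cl (σ '' A ∪ D) = cl (σ '' (A ∪ D)) := by rw [Set.image_union, hD]
      _ = σ '' cl (A ∪ D) := equivariant (reductEquiv φ σ) _

theorem Disjointifying.localization (hcl : Disjointifying L M cl) (hD : D.Finite)
    (lift : ∀ σ : M ≃[L] M, (∀ x ∈ D, σ x = x) → ∃ τ : M ≃[L'] M, ⇑τ = σ) :
    Disjointifying L' M (localization cl D) := by
  intro A B C hA hB hCA hCB
  obtain ⟨σ, hfix, hindep⟩ := hcl (A ∪ D) (B ∪ D) (C ∪ D) (hA.union hD) (hB.union hD)
    (Set.union_subset_union_left D hCA) (Set.union_subset_union_left D hCB)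
  have hσD : ∀ x ∈ D, σ x = x := fun x hx => hfix x (Or.inr hx)
  obtain ⟨τ, hτ⟩ := lift σ hσD
  rw [Set.image_union, Set.EqOn.image_eq_self hσD] at hindep
  exact ⟨τ, fun x hx => hτ ▸ hfix x (Or.inl hx), hτ ▸ hindep.localization⟩

end Localization

end Cl

theorem closure_withConstants_general {L : FirstOrder.Language} {M : Type*} [L.Structure M]
    (cl : Set M → Set M) (hinv : IsInvariantClosure L M cl) (hdisj : Disjointifying L M cl)
    {α : Type*} [Finite α] (c : α → M) (hc : cl (Set.range c) ≠ Set.univ) :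
    letI := constantsOn.structure c
    IsInvariantClosure L[[α]] M (fun A => cl (A ∪ Set.range c)) ∧
      Disjointifying L[[α]] M (fun A => cl (A ∪ Set.range c)) ∧
      cl (∅ ∪ Set.range c) ≠ Set.univ := by
  let := constantsOn.structure c
  refine ⟨hinv.localization (L.lhomWithConstants α) image_range_con,
    hdisj.localization (Set.finite_range c) fun σ hσ => ?_, by rwa [Set.empty_union]⟩
  exact ⟨equivWithConstants σ fun a => hσ (c a) (Set.mem_range_self a), rfl⟩

/-- If `cl` is a nontrivial disjointifying invariant closure operation on a countable
structure `M`, and `ā` is a tuple with `cl(ā) ≠ M`, then `cl'(A) := cl(A ∪ ā)` is a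
nontrivial disjointifying invariant closure operation on the expansion `M(ā)`. -/
theorem closure_withConstants {L : FirstOrder.Language.{u, v}} {M : Type w} [L.Structure M]
    [Countable M] (cl : Set M → Set M)
    (hinv : IsInvariantClosure L M cl) (hdisj : Disjointifying L M cl)
    (hnt : cl ∅ ≠ Set.univ)
    {n : ℕ} (c : Fin n → M) (hc : cl (Set.range c) ≠ Set.univ) :
    @IsInvariantClosure (L[[Fin n]]) M (withConsts L M c)
        (fun A => cl (A ∪ Set.range c)) ∧
      @Disjointifying (L[[Fin n]]) M (withConsts L M c)
        (fun A => cl (A ∪ Set.range c)) ∧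
      cl (∅ ∪ Set.range c) ≠ Set.univ :=
  closure_withConstants_general cl hinv hdisj c hc
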